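/- Let n ≥ 1 and define u : ℝ^n × ℝ → ℝ by u(x,t) = −max(t − 1/2, 0). Then: (i) at every point (x,t) with t ≠ 1/2, u is twice differentiable in x and differentiable in t, and Δu(x,t) − ∂_t u(x,t) = χ_{{u≠0}}(x,t); (ii) for each fixed x, the function t ↦ u(x,t) is Lipschitz continuous but not differentiable at t = 1/2. Hence u solves the equation Hu = χ_{{u≠0}} almost everywhere (with f ≡ 1) but its time derivative is discontinuous, so solutions of the no-sign parabolic obstacle problem are in general no better than Lipschitz in time. -/

import Mathlib

/-!
The function `u(x,t) = -max(t - 1/2, 0)` does not depend on `x`, so all its spatial derivatives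
vanish and `Hu = -∂ₜu`. Writing `u(x,t) = rampDown t`, the profile is locally `0` before
`t = 1/2` and locally `1/2 - t` after it, so `-∂ₜu` is `0` or `1` accordingly
(`hasDerivAt_rampDown_of_lt`, `hasDerivAt_rampDown_of_gt`), which is exactly the indicator of
`{u ≠ 0} = {t > 1/2}`. At the corner the absolute value obstructs differentiability, since
`|s| = 2 max(s, 0) - s` (`not_differentiableAt_rampDown`). The exceptional set `{t = 1/2}` is a
hyperplane, hence Lebesgue-null, which gives the almost-everywhere equation.
-/

open MeasureTheory Metric Set Filter ENNReal
open scoped Topology RealInnerProductSpace ENNReal NNReal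

noncomputable section

abbrev EucSp (n : ℕ) := EuclideanSpace ℝ (Fin n)
abbrev Pt (n : ℕ) := EucSp n × ℝ

variable (n : ℕ)

/-- Parabolic half-cylinder `Q_r^-(X⁰) = B_r(x⁰) × (t⁰ - r², t⁰]`. -/
def Qm (r : ℝ) (X : Pt n) : Set (Pt n) :=
  Metric.ball X.1 r ×ˢ Set.Ioc (X.2 - r ^ 2) X.2

/-- Full parabolic cylinder `Q_r(X⁰) = B_r(x⁰) × (t⁰ - r², t⁰ + r²)`. -/
def Qfull (r : ℝ) (X : Pt n) : Set (Pt n) :=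
  Metric.ball X.1 r ×ˢ Set.Ioo (X.2 - r ^ 2) (X.2 + r ^ 2)

/-- Parabolic boundary of `Q_r^-`. -/
def pbQm (r : ℝ) : Set (Pt n) :=
  (Metric.closedBall (0 : EucSp n) r ×ˢ ({-r ^ 2} : Set ℝ)) ∪
    (Metric.sphere (0 : EucSp n) r ×ˢ Set.Icc (-r ^ 2) 0)

/-- Time derivative `∂ₜu`. -/
def timeDeriv (u : Pt n → ℝ) (X : Pt n) : ℝ := deriv (fun s => u (X.1, s)) X.2

/-- Spatial gradient (as a continuous linear functional). -/
def spaceGrad (u : Pt n → ℝ) (X : Pt n) : EucSp n →L[ℝ] ℝ :=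
  fderiv ℝ (fun y => u (y, X.2)) X.1

/-- Entries of the spatial Hessian `∂²u/∂xᵢ∂xⱼ`. -/
def hess (u : Pt n → ℝ) (X : Pt n) (i j : Fin n) : ℝ :=
  fderiv ℝ (fun y => fderiv ℝ (fun z => u (z, X.2)) y) X.1 (EuclideanSpace.single i 1)
    (EuclideanSpace.single j 1)

/-- Spatial Laplacian. -/
def lap (u : Pt n → ℝ) (X : Pt n) : ℝ := ∑ i, hess n u X i i

/-- Heat operator `Hu = Δu - ∂ₜu`. -/
def heatOp (u : Pt n → ℝ) (X : Pt n) : ℝ := lap n u X - timeDeriv n u X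

def hessNormSq (u : Pt n → ℝ) (X : Pt n) : ℝ := ∑ i, ∑ j, hess n u X i j ^ 2

/-- `|D²u|`, the Frobenius norm of the spatial Hessian. -/
def hessNorm (u : Pt n → ℝ) (X : Pt n) : ℝ := Real.sqrt (hessNormSq n u X)

def tD2NormSq (u : Pt n → ℝ) (X : Pt n) : ℝ := hessNormSq n u X + timeDeriv n u X ^ 2

/-- `|D̃²u|² = Σᵢⱼ|∂ᵢⱼu|² + |∂ₜu|²`. -/
def tD2Norm (u : Pt n → ℝ) (X : Pt n) : ℝ := Real.sqrt (tD2NormSq n u X)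

/-- `u` is twice differentiable in `x` and differentiable in `t` at `X`. -/
def ParaDiffAt (u : Pt n → ℝ) (X : Pt n) : Prop :=
  DifferentiableAt ℝ (fun y => u (y, X.2)) X.1 ∧
    DifferentiableAt ℝ (fun y => fderiv ℝ (fun z => u (z, X.2)) y) X.1 ∧
      DifferentiableAt ℝ (fun s => u (X.1, s)) X.2

/-- Characteristic function of `{u ≠ 0}`. -/
def zeroInd (u : Pt n → ℝ) : Pt n → ℝ := Set.indicator {X : Pt n | u X ≠ 0} fun _ => (1 : ℝ)

/-- `u` is a solution of the no-sign parabolic obstacle problem in `Q₁⁻` with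
right-hand side `f`. -/
def IsNoSignSol (u f : Pt n → ℝ) : Prop :=
  IntegrableOn u (Qm n 1 0) volume ∧
    ∀ᵐ X ∂volume.restrict (Qm n 1 0),
      ParaDiffAt n u X ∧ heatOp n u X = f X * zeroInd n u X

/-- `v` is of class `W^{2,1}_∞(Q₁⁻)`. -/
def IsW21inf (v : Pt n → ℝ) : Prop :=
  (∀ᵐ X ∂volume.restrict (Qm n 1 0), ParaDiffAt n v X) ∧
    eLpNorm (tD2Norm n v) ⊤ (volume.restrict (Qm n 1 0)) < ⊤

/-- `σ` is a Dini modulus of continuity. -/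
def DiniModulus (σ : ℝ → ℝ) : Prop :=
  Continuous σ ∧ Monotone σ ∧ (∀ s, 0 ≤ σ s) ∧ σ 0 = 0 ∧
    IntegrableOn (fun s => σ s / s) (Set.Ioc (0 : ℝ) 1) volume

/-- `f` is Dini continuous on `Q₁⁻` with modulus `σ`. -/
def DiniOn (f : Pt n → ℝ) (σ : ℝ → ℝ) : Prop :=
  ∀ X ∈ Qm n 1 (0 : Pt n), ∀ Y ∈ Qm n 1 (0 : Pt n),
    |f X - f Y| ≤ σ (Real.sqrt (‖X.1 - Y.1‖ ^ 2 + |X.2 - Y.2|))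

/-- The (backward) heat kernel `G(x,t) = (4πt)^{-n/2} exp(-|x|²/(4t))`. -/
def heatKer (x : EucSp n) (t : ℝ) : ℝ :=
  (4 * Real.pi * t) ^ (-(n : ℝ) / 2) * Real.exp (-‖x‖ ^ 2 / (4 * t))

/-- The Weiss energy `W(r; v, f, X⁰)`. -/
def Weiss (v f : Pt n → ℝ) (X0 : Pt n) (r : ℝ) : ℝ :=
  (1 / r ^ 4) *
    ∫ X in (Set.univ : Set (EucSp n)) ×ˢ Set.Ioc (X0.2 - r ^ 2) X0.2,
      if v X = 0 then 0 else
        (‖spaceGrad n v X‖ ^ 2 + 2 * f X * v X + v X ^ 2 / (X.2 - X0.2)) *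
          heatKer n (X.1 - X0.1) (X0.2 - X.2)

/-- A cutoff function `ψ`: smooth, supported in `B_{3/4}`, `0 ≤ ψ ≤ 1`, `ψ = 1` on `B_{1/2}`. -/
def IsCutoff (ψ : EucSp n → ℝ) : Prop :=
  ContDiff ℝ (⊤ : ℕ∞) ψ ∧ tsupport ψ ⊆ Metric.ball (0 : EucSp n) (3 / 4) ∧
    (∀ x, 0 ≤ ψ x ∧ ψ x ≤ 1) ∧ ∀ x ∈ Metric.ball (0 : EucSp n) (1 / 2), ψ x = 1

/-- The cutoff function `v = uψ`. -/
def cutv (u : Pt n → ℝ) (ψ : EucSp n → ℝ) : Pt n → ℝ := fun X => u X * ψ X.1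

/-- Parabolic boundary of a set `E`: points of the closure `X` such that
`Q_r^-(X) ⊄ E` for all `r > 0`. -/
def paraBdry (E : Set (Pt n)) : Set (Pt n) :=
  {X ∈ closure E | ∀ r > 0, ¬Qm n r X ⊆ E}

/-- The free boundary `Γ(u) = ∂ₚ(interior {u = 0}) ∩ Q₁⁻`. -/
def freeBdry (u : Pt n → ℝ) : Set (Pt n) :=
  paraBdry n (interior {X : Pt n | u X = 0}) ∩ Qm n 1 0

/-- `X⁰` is a low energy point. -/
def LowEnergyPt (u f : Pt n → ℝ) (ψ : EucSp n → ℝ) (X0 : Pt n) : Prop :=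
  Tendsto (fun r => Weiss n (cutv n u ψ) f X0 r) (𝓝[>] 0) (𝓝 (15 / 2))

/-- Real inner product on `ℝⁿ`. -/
def rinner {n : ℕ} (x y : EucSp n) : ℝ := @inner ℝ _ _ x y

/-- `S` is a parabolic `C¹` graph in `U`. -/
def IsParaC1Graph (S U : Set (Pt n)) : Prop :=
  ∃ (e : EucSp n) (g : EucSp n × ℝ → ℝ) (Dg : EucSp n × ℝ → EucSp n →L[ℝ] ℝ),
    ‖e‖ = 1 ∧ Continuous g ∧ Continuous Dg ∧
      (∀ p : EucSp n × ℝ, HasFDerivAt (fun y => g (y, p.2)) (Dg p) p.1) ∧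
      S ∩ U = {X ∈ U | rinner X.1 e = g (X.1 - rinner X.1 e • e, X.2)}

/-- The minimal diameter of a set `S ⊆ ℝⁿ`. -/
def minDiam (S : Set (EucSp n)) : ℝ :=
  ⨅ e : { e : EucSp n // ‖e‖ = 1 },
    (sSup ((fun x => rinner x (e : EucSp n)) '' S) -
      sInf ((fun x => rinner x (e : EucSp n)) '' S))

/-- Membership in the class `𝒫₂` of caloric polynomials, encoded by the data `(A, b)`. -/
def P2 (A : Matrix (Fin n) (Fin n) ℝ) (b : ℝ) : Prop := A.IsSymm ∧ A.trace = b

/-- The polynomial `p(x,t) = ½ xᵀAx + bt` encoded by the data `(A, b)`. -/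
def P2poly (A : Matrix (Fin n) (Fin n) ℝ) (b : ℝ) : Pt n → ℝ := fun X =>
  (1 / 2) * ∑ i, ∑ j, A i j * X.1 i * X.1 j + b * X.2

/-- The quantity `∫_{Q_r^-(X⁰)} |D̃²u - D̃²p|²` for `p ∈ 𝒫₂` with data `(A, b)`. -/
def projErr (u : Pt n → ℝ) (r : ℝ) (X0 : Pt n) (A : Matrix (Fin n) (Fin n) ℝ) (b : ℝ) : ℝ :=
  ∫ X in Qm n r X0, ((∑ i, ∑ j, (hess n u X i j - A i j) ^ 2) + (timeDeriv n u X - b) ^ 2)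

/-- `(A, b)` is the data of a projection polynomial `Π(u, r, X⁰)`. -/
def IsProj (u : Pt n → ℝ) (r : ℝ) (X0 : Pt n) (A : Matrix (Fin n) (Fin n) ℝ) (b : ℝ) : Prop :=
  P2 n A b ∧ ∀ A' b', P2 n A' b' → projErr n u r X0 A b ≤ projErr n u r X0 A' b'

/-- `S(u, r, X⁰) = sup_{Q₁⁻} |D̃²Π(u, r, X⁰)|`, the Frobenius norm of the data of the
projection polynomial. -/
def projS (A : Matrix (Fin n) (Fin n) ℝ) (b : ℝ) : ℝ :=
  Real.sqrt ((∑ i, ∑ j, A i j ^ 2) + b ^ 2)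

/-- Parabolic rescaling `X ↦ (x⁰ + rx, t⁰ + r²t)`. -/
def pscale (r : ℝ) (X0 X : Pt n) : Pt n := (X0.1 + r • X.1, X0.2 + r ^ 2 * X.2)

/-- The density `λ_ρ(X⁰) = |Λ ∩ Q_ρ^-(X⁰)| / |Q_ρ^-|`. -/
def lamDens (Λ : Set (Pt n)) (ρ : ℝ) (X0 : Pt n) : ℝ :=
  (volume (Λ ∩ Qm n ρ X0)).toReal / (volume (Qm n ρ (0 : Pt n))).toReal

/-- The spatial Hessian as a Euclidean-space-valued map (with the Frobenius norm). -/
def hessVec (u : Pt n → ℝ) (X : Pt n) : EuclideanSpace ℝ (Fin n × Fin n) :=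
  (WithLp.equiv 2 (Fin n × Fin n → ℝ)).symm fun p => hess n u X p.1 p.2

/-- The parabolic BMO norm of an `F`-valued function on `Ω`. -/
def bmoNorm {F : Type*} [NormedAddCommGroup F] [NormedSpace ℝ F] [CompleteSpace F]
    (h : Pt n → F) (Ω : Set (Pt n)) : ℝ≥0∞ :=
  ((⨆ (X : Pt n) (_ : X ∈ Ω) (r : { r : ℝ // 0 < r }),
      ENNReal.ofReal ((volume (Qfull n r.1 X)).toReal⁻¹ *
        ∫ Y in Qfull n r.1 X ∩ Ω, ‖h Y - ⨍ Z in Qfull n r.1 X ∩ Ω, h Z‖ ^ 2)) +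
    eLpNorm h 2 (volume.restrict Ω) ^ 2) ^ (1 / 2 : ℝ)

/-- The operator `Lv = (x - x⁰)·∇v + 2(t - t⁰)∂ₜv - 2v`. -/
def Lop (v : Pt n → ℝ) (X0 X : Pt n) : ℝ :=
  spaceGrad n v X (X.1 - X0.1) + 2 * (X.2 - X0.2) * timeDeriv n v X - 2 * v X

end

/-- The time profile `t ↦ -max(t - 1/2, 0)` of the example. -/
noncomputable def rampDown (t : ℝ) : ℝ := -max (t - 1 / 2) 0

theorem hasDerivAt_rampDown_of_lt {t : ℝ} (ht : t < 1 / 2) : HasDerivAt rampDown 0 t := by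
  refine (hasDerivAt_const t (0 : ℝ)).congr_of_eventuallyEq ?_
  filter_upwards [Iio_mem_nhds ht] with s hs
  have hs' : s < 1 / 2 := hs
  simp only [rampDown]
  rw [max_eq_right (by linarith), neg_zero]

theorem hasDerivAt_rampDown_of_gt {t : ℝ} (ht : 1 / 2 < t) : HasDerivAt rampDown (-1) t := by
  refine ((hasDerivAt_id t).sub_const (1 / 2)).neg.congr_of_eventuallyEq ?_
  filter_upwards [Ioi_mem_nhds ht] with s hs
  have hs' : 1 / 2 < s := hs
  simp only [rampDown]
  rw [max_eq_left (by linarith)]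
  simp

theorem lipschitzWith_rampDown : LipschitzWith 1 rampDown := by
  refine LipschitzWith.of_dist_le_mul fun s t => ?_
  simp only [rampDown, NNReal.coe_one, one_mul, Real.dist_eq]
  have h := abs_max_sub_max_le_abs (s - 1 / 2) (t - 1 / 2) 0
  rw [show s - 1 / 2 - (t - 1 / 2) = s - t by ring] at h
  rwa [neg_sub_neg, abs_sub_comm]

theorem not_differentiableAt_rampDown : ¬DifferentiableAt ℝ rampDown (1 / 2) := by
  intro h
  -- `|s| = -2 rampDown (s + 1/2) - s` would be differentiable at `0`.
  have h1 : DifferentiableAt ℝ (fun s : ℝ => rampDown (s + 1 / 2)) 0 := by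
    rw [differentiableAt_comp_add_const]
    simpa using h
  refine not_differentiableAt_abs_zero
    (((h1.const_mul (-2)).sub differentiableAt_id).congr_of_eventuallyEq ?_)
  refine Eventually.of_forall fun s => ?_
  simp only [rampDown, Pi.sub_apply, id]
  rcases le_total 0 s with hs | hs
  · rw [abs_of_nonneg hs, max_eq_left (by linarith)]
    ring
  · rw [abs_of_nonpos hs, max_eq_right (by linarith)]
    ring

/-- For a function of `t` alone, twice differentiability in `x` is automatic, and the heat
operator reduces to `-∂ₜ`. -/
theorem paraDiffAt_and_heatOp_of_time (n : ℕ) {g : ℝ → ℝ} {g' : ℝ} {X : Pt n}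
    (hg : HasDerivAt g g' X.2) :
    ParaDiffAt n (fun Y => g Y.2) X ∧ heatOp n (fun Y => g Y.2) X = -g' := by
  refine ⟨⟨?_, ?_, hg.differentiableAt⟩, ?_⟩
  · simp
  · simp
  · simp [heatOp, lap, hess, timeDeriv, hg.deriv]

theorem rampDown_solves (n : ℕ) {X : Pt n} (hX : X.2 ≠ 1 / 2) :
    ParaDiffAt n (fun Y => rampDown Y.2) X ∧
      heatOp n (fun Y => rampDown Y.2) X = zeroInd n (fun Y => rampDown Y.2) X := by
  rcases lt_or_gt_of_ne hX with h | h
  · obtain ⟨hd, hH⟩ := paraDiffAt_and_heatOp_of_time n (hasDerivAt_rampDown_of_lt h)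
    refine ⟨hd, ?_⟩
    have h0 : rampDown X.2 = 0 := by
      rw [rampDown, max_eq_right (by linarith), neg_zero]
    rw [hH, zeroInd, Set.indicator_of_notMem (by simp [h0]), neg_zero]
  · obtain ⟨hd, hH⟩ := paraDiffAt_and_heatOp_of_time n (hasDerivAt_rampDown_of_gt h)
    refine ⟨hd, ?_⟩
    have h0 : rampDown X.2 ≠ 0 := by
      rw [rampDown, max_eq_left (by linarith)]
      exact neg_ne_zero.mpr (by linarith)
    rw [hH, zeroInd, Set.indicator_of_mem (by exact h0), neg_neg]

/-- **The example `u(x,t) = -max(t - 1/2, 0)`: optimality in time.** -/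
theorem stmt19 (n : ℕ) (hn : 1 ≤ n) :
    let u : Pt n → ℝ := fun X => -max (X.2 - 1 / 2) 0
    (∀ X : Pt n, X.2 ≠ 1 / 2 → ParaDiffAt n u X ∧ heatOp n u X = zeroInd n u X) ∧
      (∀ x : EucSp n,
        LipschitzWith 1 (fun t => u (x, t)) ∧
          ¬DifferentiableAt ℝ (fun t => u (x, t)) (1 / 2)) ∧
      (∀ᵐ X : Pt n ∂volume, heatOp n u X = zeroInd n u X) := by
  intro u
  refine ⟨fun X hX => rampDown_solves n hX,
    fun x => ⟨lipschitzWith_rampDown, not_differentiableAt_rampDown⟩, ?_⟩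
  -- The projection to the time axis pulls the null set `{1/2}` back to a null set.
  have hnull : ∀ᵐ X : Pt n ∂volume, X.2 ≠ 1 / 2 :=
    Measure.quasiMeasurePreserving_snd.ae (Measure.ae_ne volume (1 / 2 : ℝ))
  filter_upwards [hnull] with X hX
  exact (rampDown_solves n hX).2
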